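/- Let g ≥ 2 and let Γ be the group with presentation ⟨x₁, y₁, …, x_g, y_g ∣ [x₁,y₁][x₂,y₂]⋯[x_g,y_g] = 1⟩ (the surface group of genus g). Let A and B be finite groups, α: A ↠ B a surjective homomorphism with kernel K, f: Γ ↠ B a surjective homomorphism, and φ: Γ → A a homomorphism with α∘φ = f. Let s be the minimal number of generators of K and let n be the order of the subgroup K·φ(Γ) of A. Assume that g ≥ sn + s, that φ(x₁) = φ(x₂) = ⋯ = φ(x_{sn+s}), and that φ(y₁) = φ(y₂) = ⋯ = φ(y_{sn+s}). Then there exists a surjective homomorphism ψ: Γ ↠ A with α∘ψ = f. -/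

import Mathlib

open Filter Topology

noncomputable section

/-- The commutator `[x,y] = x⁻¹y⁻¹xy`. -/
def pComm {G : Type} [Group G] (a b : G) : G := a⁻¹ * b⁻¹ * a * b

/-- The surface relation `[x₁,y₁][x₂,y₂]⋯[x_g,y_g]` in the free group on the `2g` generators
`x_i = (i, true)`, `y_i = (i, false)`. -/
def surfaceRel (g : ℕ) : FreeGroup (Fin g × Bool) :=
  (List.ofFn fun i : Fin g =>
    pComm (FreeGroup.of (i, true)) (FreeGroup.of (i, false))).prod

/-- The surface group of genus `g`:
`⟨x₁, y₁, …, x_g, y_g ∣ [x₁,y₁][x₂,y₂]⋯[x_g,y_g] = 1⟩`. -/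
abbrev SurfaceGroup (g : ℕ) : Type :=
  PresentedGroup ({surfaceRel g} : Set (FreeGroup (Fin g × Bool)))

/-- The generator `x_i` of the surface group. -/
def sgX (g : ℕ) (i : Fin g) : SurfaceGroup g := PresentedGroup.of (i, true)

/-- The generator `y_i` of the surface group. -/
def sgY (g : ℕ) (i : Fin g) : SurfaceGroup g := PresentedGroup.of (i, false)

/-- The minimal number of generators of a group. -/
def minGens (G : Type) [Group G] : ℕ :=
  sInf {n | ∃ S : Finset G, S.card = n ∧ Subgroup.closure (S : Set G) = ⊤}

end

/-!
Since `α ∘ φ` is surjective, `K · φ(Γ)` is all of `A`, so every `a : A` satisfies `a ^ n = 1`. Let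
`x` and `y` be the common images of the first `x_i` and `y_i`, and let `k₁, …, k_s` generate `K`.
Cut the first `s * n` handles into `s` blocks of length `n`, and replace `x` by `x * k_j` throughout
the `j`-th block. Each block then contributes `[x * k_j, y] ^ n = 1 = [x, y] ^ n` to the surface
relation, so the new images still define a homomorphism `ψ`, and `α ∘ ψ = α ∘ φ` because `k_j ∈ K`.
The image of `ψ` contains every `x * k_j` and, from the next unmodified handle, `x` itself; hence it
contains `K`, and it surjects onto `B`.
-/

open scoped commutatorElement

theorem exists_fin_minGens_closure_range_eq_top (G : Type) [Group G] [Group.FG G] :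
    ∃ k : Fin (minGens G) → G, Subgroup.closure (Set.range k) = ⊤ := by
  obtain ⟨T, hT⟩ := Group.FG.out (G := G)
  have hne : {n | ∃ S : Finset G, S.card = n ∧ Subgroup.closure (S : Set G) = ⊤}.Nonempty :=
    ⟨_, T, rfl, hT⟩
  obtain ⟨S, hcard, hS⟩ : ∃ S : Finset G, S.card = minGens G ∧ Subgroup.closure (S : Set G) = ⊤ :=
    Nat.sInf_mem hne
  let e := S.equivFinOfCardEq hcard
  have hrange : Set.range (fun j => (e.symm j : G)) = S := by
    simpa [Function.comp_def] using e.symm.surjective.range_comp ((↑) : S → G)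
  exact ⟨fun j => e.symm j, hrange ▸ hS⟩

theorem exists_fin_minGens_closure_range_eq {G : Type} [Group G] (H : Subgroup G) [Group.FG H] :
    ∃ k : Fin (minGens H) → G, Subgroup.closure (Set.range k) = H := by
  obtain ⟨k, hk⟩ := exists_fin_minGens_closure_range_eq_top H
  refine ⟨fun j => k j, ?_⟩
  simpa [MonoidHom.map_closure, ← Set.range_comp, Function.comp_def, ← MonoidHom.range_eq_map]
    using congrArg (Subgroup.map H.subtype) hk

section OrderedProducts

variable {M : Type*} [Monoid M]

theorem prod_ofFn_add {m n : ℕ} (u : Fin (m + n) → M) :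
    (List.ofFn u).prod =
      (List.ofFn fun i => u (i.castAdd n)).prod * (List.ofFn fun i => u (i.natAdd m)).prod := by
  rw [List.ofFn_add, List.prod_append]
  rfl

theorem prod_ofFn_divNat {s n : ℕ} (a : Fin s → M) :
    (List.ofFn fun i : Fin (s * n) => a i.divNat).prod = (List.ofFn fun j => a j ^ n).prod := by
  rw [List.ofFn_mul, List.prod_flatten, List.map_ofFn]
  congr 2
  funext j
  have hdiv (r : Fin n) (h : (j : ℕ) * n + r < s * n) : (⟨j * n + r, h⟩ : Fin (s * n)).divNat = j :=
    Fin.ext (by simp [Fin.coe_divNat, mul_comm (j : ℕ), Nat.mul_add_div r.pos, Nat.div_eq_of_lt])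
  simp [hdiv]

end OrderedProducts

section Lifting

variable {Γ A B : Type*} [Group Γ] [Group A] [Group B] {α : A →* B} {φ : Γ →* A}

theorem ker_sup_range_eq_top (h : Function.Surjective (α.comp φ)) : α.ker ⊔ φ.range = ⊤ := by
  rw [sup_comm, ← Subgroup.comap_map_eq, MonoidHom.map_range, MonoidHom.range_eq_top.mpr h,
    Subgroup.comap_top]

theorem surjective_of_ker_le_range (h : Function.Surjective (α.comp φ)) (hker : α.ker ≤ φ.range) :
    Function.Surjective φ := by
  rw [← MonoidHom.range_eq_top, ← ker_sup_range_eq_top h, sup_eq_right.mpr hker]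

theorem pow_card_ker_sup_range_eq_one (h : Function.Surjective (α.comp φ)) (a : A) :
    a ^ Nat.card ↥(α.ker ⊔ φ.range) = 1 := by
  rw [ker_sup_range_eq_top h, Subgroup.card_top, pow_card_eq_one']

end Lifting

theorem map_pComm {G : Type} {H : Type*} [Group G] [Group H] (f : G →* H) (a b : G) :
    f (pComm a b) = ⁅(f a)⁻¹, (f b)⁻¹⁆ := by
  simp [pComm, commutatorElement_def]

theorem map_surfaceRel {H : Type*} [Group H] {g : ℕ} (f : FreeGroup (Fin g × Bool) →* H) :
    f (surfaceRel g) =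
      (List.ofFn fun i => ⁅(f (.of (i, true)))⁻¹, (f (.of (i, false)))⁻¹⁆).prod := by
  simp [surfaceRel, map_list_prod, List.map_ofFn, Function.comp_def, map_pComm]

namespace SurfaceGroup

variable {A : Type*} [Group A] {g : ℕ}

theorem prod_commutator_map_eq_one (φ : SurfaceGroup g →* A) :
    (List.ofFn fun i => ⁅(φ (sgX g i))⁻¹, (φ (sgY g i))⁻¹⁆).prod = 1 := by
  have h := map_surfaceRel (φ.comp (PresentedGroup.mk {surfaceRel g}))
  rw [MonoidHom.comp_apply, PresentedGroup.one_of_mem (Set.mem_singleton _), map_one] at h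
  exact h.symm

theorem exists_hom_of_prod_commutator_eq_one (X Y : Fin g → A)
    (h : (List.ofFn fun i => ⁅(X i)⁻¹, (Y i)⁻¹⁆).prod = 1) :
    ∃ ψ : SurfaceGroup g →* A, (∀ i, ψ (sgX g i) = X i) ∧ ∀ i, ψ (sgY g i) = Y i := by
  let F : Fin g × Bool → A := fun p => if p.2 then X p.1 else Y p.1
  have hF : ∀ r ∈ ({surfaceRel g} : Set (FreeGroup (Fin g × Bool))), FreeGroup.lift F r = 1 := by
    rintro _ rfl
    simpa [map_surfaceRel, F] using h
  exact ⟨PresentedGroup.toGroup hF, fun i => PresentedGroup.toGroup.of hF,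
    fun i => PresentedGroup.toGroup.of hF⟩

theorem hom_ext {φ ψ : SurfaceGroup g →* A} (hX : ∀ i, φ (sgX g i) = ψ (sgX g i))
    (hY : ∀ i, φ (sgY g i) = ψ (sgY g i)) : φ = ψ := by
  refine PresentedGroup.ext ?_
  rintro ⟨i, _ | _⟩
  exacts [hY i, hX i]

end SurfaceGroup

section BlockTwist

variable {A : Type*} {s n t : ℕ} {k : Fin s → A}

/-- The sequence `k₁, …, k₁, k₂, …, k₂, …, k_s, …, k_s, 1, …, 1`, in which every `k_j` is repeated
`n` times and `1` is repeated `t` times. Multiplying the images of the `x_i` by it modifies a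
homomorphism on the first `s * n` handles only. -/
def blockTwist [One A] (k : Fin s → A) (n t : ℕ) : Fin (s * n + t) → A :=
  Fin.append (fun i => k i.divNat) 1

theorem blockTwist_castAdd [One A] (i : Fin (s * n)) :
    blockTwist k n t (i.castAdd t) = k i.divNat :=
  Fin.append_left _ _ i

theorem blockTwist_natAdd [One A] (i : Fin t) : blockTwist k n t (i.natAdd (s * n)) = 1 :=
  Fin.append_right _ _ i

variable [Group A]

theorem blockTwist_mem {H : Subgroup A} (hk : ∀ j, k j ∈ H) (i : Fin (s * n + t)) :
    blockTwist k n t i ∈ H := by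
  induction i using Fin.addCases with
  | left i => exact blockTwist_castAdd (k := k) i ▸ hk _
  | right i => exact blockTwist_natAdd (k := k) i ▸ H.one_mem

theorem prod_commutator_blockTwist {x y : A} (X Y : Fin (s * n + t) → A)
    (hX : ∀ i : Fin (s * n), X (i.castAdd t) = x) (hY : ∀ i : Fin (s * n), Y (i.castAdd t) = y)
    (hpow : ∀ j, ⁅(x * k j)⁻¹, y⁻¹⁆ ^ n = ⁅x⁻¹, y⁻¹⁆ ^ n) :
    (List.ofFn fun i => ⁅(X i * blockTwist k n t i)⁻¹, (Y i)⁻¹⁆).prod =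
      (List.ofFn fun i => ⁅(X i)⁻¹, (Y i)⁻¹⁆).prod := by
  have hblocks : (List.ofFn fun i : Fin (s * n) => ⁅(x * k i.divNat)⁻¹, y⁻¹⁆).prod =
      (List.ofFn fun _ : Fin (s * n) => ⁅x⁻¹, y⁻¹⁆).prod := by
    rw [prod_ofFn_divNat fun j => ⁅(x * k j)⁻¹, y⁻¹⁆, funext hpow,
      ← prod_ofFn_divNat fun _ => ⁅x⁻¹, y⁻¹⁆]
  simp only [prod_ofFn_add, blockTwist_castAdd, blockTwist_natAdd, hX, hY, mul_one, hblocks]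

theorem SurfaceGroup.exists_blockTwist_hom (φ : SurfaceGroup (s * n + t) →* A) {x y : A}
    (hx : ∀ i : Fin (s * n), φ (sgX _ (i.castAdd t)) = x)
    (hy : ∀ i : Fin (s * n), φ (sgY _ (i.castAdd t)) = y)
    (hpow : ∀ j, ⁅(x * k j)⁻¹, y⁻¹⁆ ^ n = ⁅x⁻¹, y⁻¹⁆ ^ n) :
    ∃ ψ : SurfaceGroup (s * n + t) →* A,
      (∀ i, ψ (sgX _ i) = φ (sgX _ i) * blockTwist k n t i) ∧ ∀ i, ψ (sgY _ i) = φ (sgY _ i) :=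
  exists_hom_of_prod_commutator_eq_one _ _ <|
    (prod_commutator_blockTwist _ _ hx hy hpow).trans (prod_commutator_map_eq_one φ)

theorem mem_of_mul_blockTwist_mem {H : Subgroup A} [NeZero n] {x : A} (hx : x ∈ H)
    (h : ∀ i : Fin (s * n), x * blockTwist k n t (i.castAdd t) ∈ H) (j : Fin s) : k j ∈ H := by
  have hj : (finProdFinEquiv (j, (0 : Fin n))).divNat = j :=
    congrArg Prod.fst (finProdFinEquiv.symm_apply_apply (j, (0 : Fin n)))
  simpa [blockTwist_castAdd, hj, Subgroup.mul_mem_cancel_left H hx] using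
    h (finProdFinEquiv (j, 0))

end BlockTwist

theorem surface_group_embedding_problem_proper_solution_general
    {A B : Type*} [Group A] [Group B] {g s n : ℕ} {x y : A} (α : A →* B)
    (φ : SurfaceGroup g →* A) (hsurj : Function.Surjective (α.comp φ))
    (k : Fin s → A) (hk : Subgroup.closure (Set.range k) = α.ker) (hn : n ≠ 0) (hgenus : s * n < g)
    (hx₀ : φ (sgX g ⟨s * n, hgenus⟩) = x) (hx : ∀ i : Fin g, (i : ℕ) < s * n → φ (sgX g i) = x)
    (hy : ∀ i : Fin g, (i : ℕ) < s * n → φ (sgY g i) = y)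
    (hpow : ∀ j, ⁅(x * k j)⁻¹, y⁻¹⁆ ^ n = ⁅x⁻¹, y⁻¹⁆ ^ n) :
    ∃ ψ : SurfaceGroup g →* A, Function.Surjective ψ ∧ α.comp ψ = α.comp φ := by
  have : NeZero n := ⟨hn⟩
  obtain ⟨t, rfl⟩ := Nat.exists_eq_add_of_le hgenus.le
  have hx_block (i : Fin (s * n)) : φ (sgX _ (i.castAdd t)) = x := hx _ i.isLt
  obtain ⟨ψ, hψX, hψY⟩ :=
    SurfaceGroup.exists_blockTwist_hom φ hx_block (fun i => hy _ i.isLt) hpow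
  have hcomp : α.comp ψ = α.comp φ := by
    have hk_mem (j : Fin s) : k j ∈ α.ker := hk ▸ Subgroup.subset_closure ⟨j, rfl⟩
    refine SurfaceGroup.hom_ext (fun i => ?_) fun i => congrArg α (hψY i)
    simp [hψX, α.mem_ker.mp (blockTwist_mem hk_mem i)]
  have hx_mem : x ∈ ψ.range := by
    let i : Fin t := ⟨0, by omega⟩
    exact ⟨sgX _ (i.natAdd (s * n)), by rw [hψX, blockTwist_natAdd, mul_one]; exact hx₀⟩
  have hker : α.ker ≤ ψ.range := by
    rw [← hk, Subgroup.closure_le]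
    rintro _ ⟨j, rfl⟩
    exact mem_of_mul_blockTwist_mem (t := t) hx_mem
      (fun i => ⟨sgX _ (i.castAdd t), by rw [hψX, hx_block]⟩) j
  exact ⟨ψ, surjective_of_ker_le_range (hcomp ▸ hsurj) hker, hcomp⟩

/-- **Lemma.** Let `Γ` be the surface group of genus `g ≥ 2`, `α : A ↠ B` a surjection of
finite groups with kernel `K`, `f : Γ ↠ B` a surjection, and `φ : Γ → A` a homomorphism with
`α ∘ φ = f` (a weak solution).  Let `s` be the minimal number of generators of `K` and
`n = |K·φ(Γ)|`.  If `g ≥ sn + s` and `φ(x₁) = ⋯ = φ(x_{sn+s})`,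
`φ(y₁) = ⋯ = φ(y_{sn+s})`, then the embedding problem has a proper solution: there is a
surjection `ψ : Γ ↠ A` with `α ∘ ψ = f`. -/
theorem surface_group_embedding_problem_proper_solution
    (g : ℕ) (hg : 2 ≤ g)
    (A B : Type) [Group A] [Group B] [Finite A] [Finite B]
    (α : A →* B) (hα : Function.Surjective α)
    (f : SurfaceGroup g →* B) (hf : Function.Surjective f)
    (φ : SurfaceGroup g →* A) (hweak : α.comp φ = f)
    (s n : ℕ) (hs : s = minGens ↥(MonoidHom.ker α))
    (hn : n = Nat.card ↥(MonoidHom.ker α ⊔ MonoidHom.range φ))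
    (hgenus : s * n + s ≤ g)
    (hx : ∀ i j : Fin g, (i : ℕ) < s * n + s → (j : ℕ) < s * n + s →
      φ (sgX g i) = φ (sgX g j))
    (hy : ∀ i j : Fin g, (i : ℕ) < s * n + s → (j : ℕ) < s * n + s →
      φ (sgY g i) = φ (sgY g j)) :
    ∃ ψ : SurfaceGroup g →* A, Function.Surjective ψ ∧ α.comp ψ = f := by
  subst hweak
  obtain ⟨k, hk⟩ : ∃ k : Fin s → A, Subgroup.closure (Set.range k) = α.ker :=
    hs ▸ exists_fin_minGens_closure_range_eq α.ker
  have hpow (a : A) : a ^ n = 1 := hn ▸ pow_card_ker_sup_range_eq_one hf a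
  have hlt : s * n < g := by
    rcases s.eq_zero_or_pos with h | h
    · simpa [h] using zero_lt_two.trans_le hg
    · omega
  have hlast {i : ℕ} (hi : i < s * n) : s * n < s * n + s :=
    Nat.lt_add_of_pos_right (Nat.pos_of_mul_pos_right (Nat.zero_lt_of_lt hi))
  exact surface_group_embedding_problem_proper_solution_general α φ hf k hk
    (hn ▸ Nat.card_pos.ne') hlt rfl
    (fun i hi => hx i _ (hi.trans (hlast hi)) (hlast hi))
    (fun i hi => hy i ⟨s * n, hlt⟩ (hi.trans (hlast hi)) (hlast hi))
    fun j => by rw [hpow, hpow]
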